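/- Let μ > 1, set γ = (1+√μ)/(μ−1), and let x > 0 be the unique solution of F(γ, x) = 2. If γ < (3π − ϖ²)/ϖ² then σ⁺(γ,x)/2 > γ + 1 (the orbits of the two electrons intersect), and if γ > (3π − ϖ²)/ϖ² then σ⁺(γ,x)/2 < γ + 1 (the orbits do not intersect). Here ϖ = 2∫₀¹ dt/√(1−t⁴) is the lemniscatic constant. -/

import Mathlib

open Real intervalIntegral

/-- `σ⁺(γ,x) = 2 − γ²x + √((2−γ²x)² + 4(γ+1)²)`. -/
noncomputable def sigmaPlus (γ x : ℝ) : ℝ :=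
  2 - γ ^ 2 * x + Real.sqrt ((2 - γ ^ 2 * x) ^ 2 + 4 * (γ + 1) ^ 2)

/-- `σ⁻(γ,x) = 2 − γ²x − √((2−γ²x)² + 4(γ+1)²)`. -/
noncomputable def sigmaMinus (γ x : ℝ) : ℝ :=
  2 - γ ^ 2 * x - Real.sqrt ((2 - γ ^ 2 * x) ^ 2 + 4 * (γ + 1) ^ 2)

/-- `F(γ,x) = σ⁺(γ,x) · (∫₀¹ r^{3/2}/√((1−r)(σ⁺ r − σ⁻)) dr) /
    (∫₀¹ r^{1/2}/√((1−r)(σ⁺ r − σ⁻)) dr)`. -/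
noncomputable def F (γ x : ℝ) : ℝ :=
  sigmaPlus γ x *
    (∫ r in (0:ℝ)..1, r ^ ((3:ℝ)/2) /
      Real.sqrt ((1 - r) * (sigmaPlus γ x * r - sigmaMinus γ x))) /
    (∫ r in (0:ℝ)..1, r ^ ((1:ℝ)/2) /
      Real.sqrt ((1 - r) * (sigmaPlus γ x * r - sigmaMinus γ x)))

/-- The lemniscatic constant `ϖ = 2∫₀¹ dt/√(1−t⁴)`. -/
noncomputable def varpi : ℝ := 2 * ∫ t in (0:ℝ)..1, 1 / Real.sqrt (1 - t ^ 4)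

/-!
Write `σ⁺ = s`, `-σ⁻ = m` and `k = m / s`. If `γ ≤ -1`, then `γ + 1 ≤ 0 < s` and both equivalences
are clear. Otherwise, since `s * m = (2 * (γ + 1)) ^ 2`, the orbits intersect exactly when `k < 1`.
Pulling `√s` out of both integrals turns `F γ x = 2` into `γ + 1 = Φ k` for a function `Φ` of one
variable: its numerator `√k * ∫ r ^ (1/2) / √((1 - r) * (r + k))` is increasing in `k` and its
denominator `∫ r ^ (3/2) / √((1 - r) * (r + k))` is decreasing. Hence `k < 1` is equivalent to
`γ + 1 < Φ 1`, and at `k = 1` both integrals are Beta values, which gives `Φ 1 = 3 * π / ϖ ^ 2`.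
-/

open MeasureTheory Set

section Beta

variable {a b p q : ℝ}

lemma integral_rpow_mul_one_sub_rpow (ha : 0 < a) (hb : 0 < b) :
    ∫ r in (0 : ℝ)..1, r ^ (a - 1) * (1 - r) ^ (b - 1) = ProbabilityTheory.beta a b := by
  have ofReal_integral : ((∫ r in (0 : ℝ)..1, r ^ (a - 1) * (1 - r) ^ (b - 1) : ℝ) : ℂ)
      = Complex.betaIntegral a b := by
    rw [← intervalIntegral.integral_ofReal, Complex.betaIntegral]
    refine integral_congr_Ioo_of_le zero_le_one fun r hr ↦ ?_
    simp only [Complex.ofReal_mul, Complex.ofReal_cpow hr.1.le,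
      Complex.ofReal_cpow (sub_nonneg.2 hr.2.le), Complex.ofReal_sub, Complex.ofReal_one]
  rw [ProbabilityTheory.beta_eq_betaIntegralReal a b ha hb, ← ofReal_integral, Complex.ofReal_re]

lemma intervalIntegrable_rpow_mul_one_sub_rpow (ha : 0 < a) (hb : 0 < b) :
    IntervalIntegrable (fun r : ℝ ↦ r ^ (a - 1) * (1 - r) ^ (b - 1)) volume 0 1 := by
  refine intervalIntegrable_of_integral_ne_zero ?_
  rw [integral_rpow_mul_one_sub_rpow ha hb]
  exact (ProbabilityTheory.beta_pos ha hb).ne'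

lemma integral_smul_comp_rpow {E : Type*} [NormedAddCommGroup E] [NormedSpace ℝ E] (g : ℝ → E)
    (ha : 0 ≤ a) (hb : 0 ≤ b) (hp : 0 < p) :
    ∫ t in a..b, (p * t ^ (p - 1)) • g (t ^ p) = ∫ u in a ^ p..b ^ p, g u := by
  have pos_of_mem {t : ℝ} (ht : t ∈ Ioo (min a b) (max a b)) : 0 < t := (le_min ha hb).trans_lt ht.1
  exact integral_deriv_smul_comp_of_deriv_nonneg (continuous_rpow_const hp.le).continuousOn
    (fun t ht ↦ hasDerivAt_rpow_const (.inl (pos_of_mem ht).ne'))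
    fun t ht ↦ by have := pos_of_mem ht; positivity

lemma integral_rpow_mul_one_sub_rpow_rpow (hp : 0 < p) (hq : -1 < q) (hb : 0 < b) :
    ∫ t in (0 : ℝ)..1, t ^ q * (1 - t ^ p) ^ (b - 1)
      = ProbabilityTheory.beta ((q + 1) / p) b / p := by
  have substitution := integral_smul_comp_rpow
    (fun u : ℝ ↦ u ^ ((q + 1) / p - 1) * (1 - u) ^ (b - 1)) le_rfl zero_le_one hp
  rw [zero_rpow hp.ne', one_rpow, integral_rpow_mul_one_sub_rpow (div_pos (by linarith) hp) hb]
    at substitution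
  rw [← substitution, eq_div_iff hp.ne', ← intervalIntegral.integral_mul_const]
  refine integral_congr_Ioo_of_le zero_le_one fun t ht ↦ ?_
  have exponent : t ^ q = t ^ (p - 1) * (t ^ p) ^ ((q + 1) / p - 1) := by
    rw [← rpow_mul ht.1.le, ← rpow_add ht.1]
    congr 1
    field
  simp only [smul_eq_mul, exponent]
  ring

lemma integral_rpow_div_sqrt_one_sub_rpow (hp : 0 < p) (hq : -1 < q) :
    ∫ t in (0 : ℝ)..1, t ^ q / √(1 - t ^ p)
      = ProbabilityTheory.beta ((q + 1) / p) (1 / 2) / p := by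
  rw [← integral_rpow_mul_one_sub_rpow_rpow hp hq one_half_pos]
  refine integral_congr_Ioo_of_le zero_le_one fun t ht ↦ ?_
  have h : 0 ≤ 1 - t ^ p := sub_nonneg.2 (rpow_le_one ht.1.le ht.2.le hp.le)
  simp only [div_eq_mul_inv, sqrt_eq_rpow, ← rpow_neg h]
  norm_num

end Beta

/-- The integral `∫₀¹ r ^ e / √((1 - r) * (s * r + m)) dr`; `F` is a quotient of two of these, with
`s = σ⁺` and `m = -σ⁻`. -/
noncomputable def orbitIntegral (e s m : ℝ) : ℝ :=
  ∫ r in (0 : ℝ)..1, r ^ e / √((1 - r) * (s * r + m))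

section OrbitIntegral

variable {e s m s' m' : ℝ}

lemma affine_pos_of_endpoints (hm : 0 < m) (hsm : 0 < s + m) {r : ℝ} (hr : r ∈ Icc (0 : ℝ) 1) :
    0 < s * r + m := by
  rw [show s * r + m = (1 - r) * m + r * (s + m) by ring]
  rcases hr.1.eq_or_lt with rfl | hr0
  · simpa
  · exact add_pos_of_nonneg_of_pos (mul_nonneg (sub_nonneg.2 hr.2) hm.le) (mul_pos hr0 hsm)

lemma intervalIntegrable_orbitIntegrand (he : -1 < e) (hm : 0 < m) (hsm : 0 < s + m) :
    IntervalIntegrable (fun r : ℝ ↦ r ^ e / √((1 - r) * (s * r + m))) volume 0 1 := by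
  have hcont : ContinuousOn (fun r : ℝ ↦ (√(s * r + m))⁻¹) (uIcc 0 1) := by
    rw [uIcc_of_le zero_le_one]
    exact ContinuousOn.inv₀ (by fun_prop) fun r hr ↦
      (sqrt_pos.2 (affine_pos_of_endpoints hm hsm hr)).ne'
  have hbeta := intervalIntegrable_rpow_mul_one_sub_rpow (by linarith : 0 < e + 1) one_half_pos
  refine (hbeta.mul_continuousOn hcont).congr_uIoo fun r hr ↦ ?_
  rw [uIoo_of_le zero_le_one] at hr
  have h1 : 0 ≤ 1 - r := by linarith [hr.2]
  simp only [sqrt_mul h1, div_eq_mul_inv, mul_inv, sqrt_eq_rpow (1 - r), ← rpow_neg h1]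
  norm_num [mul_assoc]

lemma orbitIntegral_pos (he : -1 < e) (hm : 0 < m) (hsm : 0 < s + m) :
    0 < orbitIntegral e s m := by
  refine intervalIntegral_pos_of_pos_on (intervalIntegrable_orbitIntegrand he hm hsm)
    (fun r hr ↦ ?_) zero_lt_one
  have h0 := hr.1
  have h1 : 0 < 1 - r := by linarith [hr.2]
  have h2 := affine_pos_of_endpoints hm hsm (Ioo_subset_Icc_self hr)
  positivity

lemma orbitIntegral_lt_orbitIntegral (he : -1 < e) (hm : 0 < m) (hsm : 0 < s + m)
    (hmm' : m ≤ m') (hlt : s + m < s' + m') : orbitIntegral e s' m' < orbitIntegral e s m := by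
  have hm' := hm.trans_le hmm'
  have hsm' := hsm.trans hlt
  rw [← sub_pos, orbitIntegral, orbitIntegral, ← intervalIntegral.integral_sub
    (intervalIntegrable_orbitIntegrand he hm hsm) (intervalIntegrable_orbitIntegrand he hm' hsm')]
  refine intervalIntegral_pos_of_pos_on
    ((intervalIntegrable_orbitIntegrand he hm hsm).sub
      (intervalIntegrable_orbitIntegrand he hm' hsm')) (fun r hr ↦ ?_) zero_lt_one
  have h0 := hr.1
  have h1 : 0 < 1 - r := by linarith [hr.2]
  have hpos := affine_pos_of_endpoints hm hsm (Ioo_subset_Icc_self hr)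
  have affine_lt : s * r + m < s' * r + m' := by nlinarith [hr.2]
  rw [sub_pos]
  gcongr

lemma orbitIntegral_mul_mul {c : ℝ} (hc : 0 ≤ c) (e s m : ℝ) :
    orbitIntegral e (c * s) (c * m) = orbitIntegral e s m / √c := by
  rw [orbitIntegral, orbitIntegral, ← intervalIntegral.integral_div]
  congr 1 with r
  rw [show (1 - r) * (c * s * r + c * m) = c * ((1 - r) * (s * r + m)) by ring, sqrt_mul hc,
    div_div, mul_comm]

lemma sqrt_mul_orbitIntegral_one {k : ℝ} (hk : 0 < k) (e : ℝ) :
    √k * orbitIntegral e 1 k = orbitIntegral e k⁻¹ 1 := by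
  have h := orbitIntegral_mul_mul (inv_nonneg.2 hk.le) e 1 k
  rw [mul_one, inv_mul_cancel₀ hk.ne', sqrt_inv, div_inv_eq_mul] at h
  rw [h, mul_comm]

lemma strictMonoOn_sqrt_mul_orbitIntegral (he : -1 < e) :
    StrictMonoOn (fun k ↦ √k * orbitIntegral e 1 k) (Ioi 0) := by
  intro k (hk : 0 < k) l (hl : 0 < l) hkl
  simp only [sqrt_mul_orbitIntegral_one hk, sqrt_mul_orbitIntegral_one hl]
  exact orbitIntegral_lt_orbitIntegral he one_pos (by positivity) le_rfl (by gcongr)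

lemma strictAntiOn_orbitIntegral (he : -1 < e) : StrictAntiOn (orbitIntegral e 1) (Ioi 0) := by
  intro k (hk : 0 < k) l _ hkl
  exact orbitIntegral_lt_orbitIntegral he hk (by positivity) hkl.le (by gcongr)

lemma orbitIntegral_one_one (he : -1 < e) :
    orbitIntegral e 1 1 = ProbabilityTheory.beta ((e + 1) / 2) (1 / 2) / 2 := by
  rw [← integral_rpow_div_sqrt_one_sub_rpow two_pos he, orbitIntegral]
  congr! 4 with r
  rw [rpow_two]
  ring

end OrbitIntegral

/-- The function `Φ` for which `F γ x = 2` becomes `|γ + 1| = Φ(-σ⁻ / σ⁺)`. -/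
noncomputable def orbitRatio (k : ℝ) : ℝ :=
  √k * orbitIntegral (1 / 2) 1 k / orbitIntegral (3 / 2) 1 k

lemma orbitRatio_pos {k : ℝ} (hk : 0 < k) : 0 < orbitRatio k :=
  div_pos (mul_pos (sqrt_pos.2 hk) (orbitIntegral_pos (by norm_num) hk (by positivity)))
    (orbitIntegral_pos (by norm_num) hk (by positivity))

lemma strictMonoOn_orbitRatio : StrictMonoOn orbitRatio (Ioi 0) := by
  intro k (hk : 0 < k) l (hl : 0 < l) hkl
  have hnum := strictMonoOn_sqrt_mul_orbitIntegral (e := 1 / 2) (by norm_num) hk hl hkl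
  have hden := strictAntiOn_orbitIntegral (e := 3 / 2) (by norm_num) hk hl hkl
  have hpos : 0 < orbitIntegral (3 / 2) 1 l := orbitIntegral_pos (by norm_num) hl (by positivity)
  have hnum_nonneg : 0 ≤ √k * orbitIntegral (1 / 2) 1 k :=
    mul_nonneg (sqrt_nonneg k) (orbitIntegral_pos (by norm_num) hk (by positivity)).le
  exact div_lt_div₀ hnum hden.le (hnum_nonneg.trans hnum.le) hpos

lemma varpi_eq_beta : varpi = ProbabilityTheory.beta (1 / 4) (1 / 2) / 2 := by
  have h := integral_rpow_div_sqrt_one_sub_rpow (p := 4) (q := 0) (by norm_num) (by norm_num)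
  simp only [rpow_zero, zero_add, rpow_ofNat] at h
  rw [varpi, h]
  ring

lemma varpi_pos : 0 < varpi := by
  rw [varpi_eq_beta]
  exact half_pos (ProbabilityTheory.beta_pos (by norm_num) (by norm_num))

lemma beta_three_quarters_div_beta_five_quarters :
    ProbabilityTheory.beta (3 / 4) (1 / 2) / ProbabilityTheory.beta (5 / 4) (1 / 2)
      = 3 * π / varpi ^ 2 := by
  have gamma_five_quarters : Gamma (5 / 4) = 1 / 4 * Gamma (1 / 4) := by
    rw [← Gamma_add_one (by norm_num)]; norm_num
  have gamma_seven_quarters : Gamma (7 / 4) = 3 / 4 * Gamma (3 / 4) := by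
    rw [← Gamma_add_one (by norm_num)]; norm_num
  have pi_eq : π = Gamma (1 / 2) ^ 2 := by rw [Gamma_one_half_eq, sq_sqrt pi_pos.le]
  rw [varpi_eq_beta, pi_eq]
  unfold ProbabilityTheory.beta
  rw [show (3 : ℝ) / 4 + 1 / 2 = 5 / 4 by norm_num, show (5 : ℝ) / 4 + 1 / 2 = 7 / 4 by norm_num,
    show (1 : ℝ) / 4 + 1 / 2 = 3 / 4 by norm_num, gamma_five_quarters, gamma_seven_quarters]
  field

lemma orbitRatio_one : orbitRatio 1 = 3 * π / varpi ^ 2 := by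
  rw [orbitRatio, sqrt_one, one_mul, orbitIntegral_one_one (by norm_num),
    orbitIntegral_one_one (by norm_num), div_div_div_cancel_right₀ two_ne_zero,
    ← beta_three_quarters_div_beta_five_quarters]
  norm_num

section Sigma

variable {γ : ℝ}

lemma sigmaPlus_nonneg (γ x : ℝ) : 0 ≤ sigmaPlus γ x := by
  have h : |2 - γ ^ 2 * x| ≤ √((2 - γ ^ 2 * x) ^ 2 + 4 * (γ + 1) ^ 2) :=
    abs_le_sqrt (by linarith [sq_nonneg (γ + 1)])
  rw [sigmaPlus]
  linarith [neg_le_of_abs_le h]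

lemma sigmaPlus_mul_neg_sigmaMinus (γ x : ℝ) :
    sigmaPlus γ x * -sigmaMinus γ x = (2 * (γ + 1)) ^ 2 := by
  have h := sq_sqrt (by positivity : 0 ≤ (2 - γ ^ 2 * x) ^ 2 + 4 * (γ + 1) ^ 2)
  rw [sigmaPlus, sigmaMinus]
  linear_combination h

lemma sigmaPlus_pos (hγ : γ + 1 ≠ 0) (x : ℝ) : 0 < sigmaPlus γ x := by
  refine (sigmaPlus_nonneg γ x).lt_of_ne' (left_ne_zero_of_mul (b := -sigmaMinus γ x) ?_)
  rw [sigmaPlus_mul_neg_sigmaMinus]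
  positivity

/-- The ratio `-σ⁻ / σ⁺`, whose position relative to `1` decides whether the orbits intersect. -/
noncomputable def sigmaRatio (γ x : ℝ) : ℝ :=
  -sigmaMinus γ x / sigmaPlus γ x

lemma sigmaRatio_pos (hγ : γ + 1 ≠ 0) (x : ℝ) : 0 < sigmaRatio γ x := by
  have hσ := sigmaPlus_pos hγ x
  refine div_pos (pos_of_mul_pos_right ?_ hσ.le) hσ
  rw [sigmaPlus_mul_neg_sigmaMinus]
  positivity

lemma sigmaPlus_mul_sigmaRatio (hγ : γ + 1 ≠ 0) (x : ℝ) :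
    sigmaPlus γ x * sigmaRatio γ x = -sigmaMinus γ x :=
  mul_div_cancel₀ _ (sigmaPlus_pos hγ x).ne'

lemma sigmaPlus_mul_sqrt_sigmaRatio (hγ : γ + 1 ≠ 0) (x : ℝ) :
    sigmaPlus γ x * √(sigmaRatio γ x) = 2 * |γ + 1| := by
  have hσ := (sigmaPlus_pos hγ x).le
  calc sigmaPlus γ x * √(sigmaRatio γ x)
      = √(sigmaPlus γ x * (sigmaPlus γ x * sigmaRatio γ x)) := by
        rw [← mul_assoc, sqrt_mul (mul_self_nonneg _), sqrt_mul_self hσ]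
    _ = √((2 * (γ + 1)) ^ 2) := by
        rw [sigmaPlus_mul_sigmaRatio hγ, sigmaPlus_mul_neg_sigmaMinus]
    _ = 2 * |γ + 1| := by rw [sqrt_sq_eq_abs, abs_mul, abs_two]

lemma F_eq_orbitIntegral (γ x : ℝ) :
    F γ x = sigmaPlus γ x * orbitIntegral (3 / 2) (sigmaPlus γ x) (-sigmaMinus γ x)
      / orbitIntegral (1 / 2) (sigmaPlus γ x) (-sigmaMinus γ x) := by
  simp only [F, orbitIntegral, sub_eq_add_neg]

lemma F_eq_div_orbitRatio (hγ : γ + 1 ≠ 0) (x : ℝ) :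
    F γ x = 2 * |γ + 1| / orbitRatio (sigmaRatio γ x) := by
  have hσ := sigmaPlus_pos hγ x
  have hk := sigmaRatio_pos hγ x
  have h1 : 0 < orbitIntegral (1 / 2) 1 (sigmaRatio γ x) :=
    orbitIntegral_pos (by norm_num) hk (by positivity)
  have h3 : 0 < orbitIntegral (3 / 2) 1 (sigmaRatio γ x) :=
    orbitIntegral_pos (by norm_num) hk (by positivity)
  have scaling (e : ℝ) : orbitIntegral e (sigmaPlus γ x) (-sigmaMinus γ x)
      = orbitIntegral e 1 (sigmaRatio γ x) / √(sigmaPlus γ x) := by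
    rw [← orbitIntegral_mul_mul hσ.le, mul_one, sigmaPlus_mul_sigmaRatio hγ]
  rw [F_eq_orbitIntegral, scaling, scaling, ← sigmaPlus_mul_sqrt_sigmaRatio hγ x, orbitRatio]
  field

lemma F_eq_two_iff (hγ : γ + 1 ≠ 0) (x : ℝ) :
    F γ x = 2 ↔ orbitRatio (sigmaRatio γ x) = |γ + 1| := by
  rw [F_eq_div_orbitRatio hγ, div_eq_iff (orbitRatio_pos (sigmaRatio_pos hγ x)).ne',
    mul_right_inj' two_ne_zero, eq_comm]

lemma lt_sigmaPlus_div_two_iff (hγ : 0 < γ + 1) (x : ℝ) :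
    γ + 1 < sigmaPlus γ x / 2 ↔ sigmaRatio γ x < 1 := by
  have h := sigmaPlus_mul_sqrt_sigmaRatio hγ.ne' x
  have hσ := sigmaPlus_pos hγ.ne' x
  rw [abs_of_pos hγ] at h
  rw [show γ + 1 = sigmaPlus γ x / 2 * √(sigmaRatio γ x) by linarith,
    mul_lt_iff_lt_one_right (half_pos hσ), sqrt_lt' one_pos, one_pow]

lemma sigmaPlus_div_two_lt_iff (hγ : 0 < γ + 1) (x : ℝ) :
    sigmaPlus γ x / 2 < γ + 1 ↔ 1 < sigmaRatio γ x := by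
  have h := sigmaPlus_mul_sqrt_sigmaRatio hγ.ne' x
  have hσ := sigmaPlus_pos hγ.ne' x
  rw [abs_of_pos hγ] at h
  rw [show γ + 1 = sigmaPlus γ x / 2 * √(sigmaRatio γ x) by linarith,
    lt_mul_iff_one_lt_right (half_pos hσ), lt_sqrt zero_le_one, one_pow]

end Sigma

theorem statement_10_general (γ x : ℝ) (hFx : F γ x = 2) :
    (γ < (3 * π - varpi ^ 2) / varpi ^ 2 ↔ sigmaPlus γ x / 2 > γ + 1) ∧
    (γ > (3 * π - varpi ^ 2) / varpi ^ 2 ↔ sigmaPlus γ x / 2 < γ + 1) := by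
  have hϖ := varpi_pos
  have threshold : (3 * π - varpi ^ 2) / varpi ^ 2 = 3 * π / varpi ^ 2 - 1 := by field
  rw [threshold]
  rcases le_or_gt (γ + 1) 0 with hγ | hγ
  · have hσ : 0 < sigmaPlus γ x :=
      (sigmaPlus_nonneg γ x).lt_of_ne' fun h ↦ by simp [F, h] at hFx
    have hΦ : 0 < 3 * π / varpi ^ 2 := by positivity
    constructor <;> constructor <;> intro <;> linarith
  · have hk := sigmaRatio_pos hγ.ne' x
    have hratio : orbitRatio (sigmaRatio γ x) = γ + 1 := by
      rw [(F_eq_two_iff hγ.ne' x).1 hFx, abs_of_pos hγ]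
    rw [gt_iff_lt, gt_iff_lt, lt_sigmaPlus_div_two_iff hγ, sigmaPlus_div_two_lt_iff hγ,
      ← strictMonoOn_orbitRatio.lt_iff_lt hk (mem_Ioi.2 one_pos),
      ← strictMonoOn_orbitRatio.lt_iff_lt (mem_Ioi.2 one_pos) hk, orbitRatio_one, hratio,
      lt_sub_iff_add_lt, sub_lt_iff_lt_add]
    exact ⟨Iff.rfl, Iff.rfl⟩

/-- For `μ > 1`, `γ = (1+√μ)/(μ−1)` and `x > 0` the unique solution of `F(γ,x) = 2`:
if `γ < (3π−ϖ²)/ϖ²` the two orbits intersect (`σ⁺(γ,x)/2 > γ+1`) and if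
`γ > (3π−ϖ²)/ϖ²` they do not (`σ⁺(γ,x)/2 < γ+1`). -/
theorem statement_10 (μ γ x : ℝ) (hμ : 1 < μ) (hγ : γ = (1 + Real.sqrt μ) / (μ - 1))
    (hx : 0 < x) (hFx : F γ x = 2) :
    (γ < (3 * π - varpi ^ 2) / varpi ^ 2 → sigmaPlus γ x / 2 > γ + 1) ∧
    (γ > (3 * π - varpi ^ 2) / varpi ^ 2 → sigmaPlus γ x / 2 < γ + 1) := by
  have h := statement_10_general γ x hFx
  exact ⟨h.1.1, h.2.1⟩
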